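/- If ℓ is a nonzero Gaussian integer with |ℓ|_∞ ≥ 2 and M ≥ 4, then |F_M-hat(ℓ)| ≤ C |ℓ|_∞^{-a} ln|ℓ|_∞ for an absolute constant C, where F_M is built from Gaussian primes and a = 2/(1+τ). -/

import Mathlib

open MeasureTheory Complex GaussianInt

noncomputable def gnorm (q : GaussianInt) : ℝ := max |(q.re : ℝ)| |(q.im : ℝ)|
noncomputable def snorm2 (z : ℂ) : ℝ := max |z.re| |z.im|
noncomputable def ec (t : ℝ) : ℂ := Complex.exp (-2 * Real.pi * Complex.I * t)
def inn (ξ x : ℂ) : ℝ := ξ.re * x.re + ξ.im * x.im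
def unitSquare : Set ℂ := {z : ℂ | z.re ∈ Set.Icc (0:ℝ) 1 ∧ z.im ∈ Set.Icc (0:ℝ) 1}
noncomputable def fcoeff (f : ℂ → ℂ) (ξ : ℂ) : ℂ := ∫ x in unitSquare, ec (inn ξ x) * f x
noncomputable def ftr (f : ℂ → ℂ) (ξ : ℂ) : ℂ := ∫ x : ℂ, ec (inn ξ x) * f x
noncomputable def Phi (φ : ℂ → ℝ) (ε : ℝ) (x : ℂ) : ℝ :=
  ∑' r : GaussianInt, ε⁻¹ ^ 2 * φ (ε⁻¹ • (x - toComplex r))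
noncomputable def Z2 (M : ℝ) : Set GaussianInt := {q | M / 2 < gnorm q ∧ gnorm q ≤ M}
noncomputable def FM (φ : ℂ → ℝ) (τ M : ℝ) (x : ℂ) : ℝ :=
  ((Z2 M).ncard : ℝ)⁻¹ * ∑' q : (Z2 M), Phi φ (M ^ (-τ) / 2) (toComplex q.1 * x)
noncomputable def PM (M : ℝ) : Set GaussianInt := {q | Prime q ∧ M / 2 < gnorm q ∧ gnorm q ≤ M}
noncomputable def FMP (φ : ℂ → ℝ) (τ M : ℝ) (x : ℂ) : ℝ :=
  ((PM M).ncard : ℝ)⁻¹ * ∑' q : (PM M), Phi φ (M ^ (-τ) / 2) (toComplex q.1 * x)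
noncomputable def mhat (μ : Measure ℂ) (ξ : ℂ) : ℂ := ∫ x, ec (inn ξ x) ∂μ

/-!
`Phi φ ε` is `ℤ[i]`-periodic, so its dilate `x ↦ Phi φ ε (q x)` is invariant under translation by
`q⁻¹ ℤ[i]`. Hence its Fourier coefficient at `ℓ` vanishes unless `star q ∣ ℓ`, and when
`ℓ = star q * k` it equals the Fourier transform of `φ` at `ε k`. Multiplication by `q` preserves
integrals of periodic functions over the unit square, because averaging over all translates turns
one integral into the other.

With `|q| ≤ 2 M` and `ε = M ^ (-τ) / 2`, the frequency `ε k` has size at least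
`|ℓ| * M ^ (-(1 + τ)) / 4`, and the decay `O(|ξ| ^ (-a))` of the Fourier transform with
`a (1 + τ) = 2` bounds each surviving coefficient by `O(M ^ 2 * |ℓ| ^ (-a))`. By unique
factorization only `O(log |ℓ| / log M)` of the primes survive, while there are at least
`c * M ^ 2 / log M` primes in the average, so the powers of `M` cancel.

The lower bound for the number of Gaussian primes only needs a Chebyshev estimate for rational
primes `p ≡ 1 mod 4`, each of which is a norm. Write `T` and `S` for the sums of `log n` and of
`χ₄ n * log n` over `n ≤ N`. The combination `(T(N) - 2 T(N / 2)) - (T(N / 3) - 2 T(N / 6))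
+ S(N) - S(N / 2) + S(N / 3) - S(N / 6)` is `(2 / 3) log 2 * N + O(log N)`, and its expansion in
terms of `Λ` gives the primes `p ≡ 3 mod 4` in `(N / 2, N]` nonpositive weight; what remains
outside the wanted range is controlled by Chebyshev's upper bound for `ψ`.
-/

section DirichletHyperbola

open ArithmeticFunction Finset
open scoped ArithmeticFunction.zeta

theorem sum_Ioc_mul_log_eq_sum_vonMangoldt {c : ℕ → ℝ} (hc : ∀ m n, c (m * n) = c m * c n)
    (N : ℕ) :
    ∑ n ∈ Ioc 0 N, c n * Real.log n = ∑ d ∈ Ioc 0 N, Λ d * (c d * ∑ k ∈ Ioc 0 (N / d), c k) := by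
  let Λc : ArithmeticFunction ℝ := ⟨fun n => Λ n * c n, by simp⟩
  let ζc : ArithmeticFunction ℝ := ⟨fun n => (ζ n : ℝ) * c n, by simp⟩
  have hconv (n : ℕ) : (Λc * ζc) n = c n * Real.log n := by
    rw [mul_apply, ← vonMangoldt_sum, mul_sum, Nat.sum_divisorsAntidiagonal fun i j => Λc i * ζc j]
    refine sum_congr rfl fun d hd => ?_
    obtain ⟨⟨k, rfl⟩, hn⟩ := Nat.mem_divisors.1 hd
    have hd0 : 0 < d := Nat.pos_of_ne_zero (left_ne_zero_of_mul hn)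
    simp only [Λc, ζc, coe_mk, Nat.mul_div_cancel_left k hd0,
      zeta_apply_ne (right_ne_zero_of_mul hn), hc]
    push_cast
    ring
  calc ∑ n ∈ Ioc 0 N, c n * Real.log n = ∑ n ∈ Ioc 0 N, (Λc * ζc) n := by simp only [hconv]
    _ = ∑ d ∈ Ioc 0 N, Λc d * ∑ k ∈ Ioc 0 (N / d), ζc k := sum_Ioc_mul_eq_sum_sum Λc ζc N
    _ = ∑ d ∈ Ioc 0 N, Λ d * (c d * ∑ k ∈ Ioc 0 (N / d), c k) := by
      refine sum_congr rfl fun d _ => ?_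
      have hζ : ∑ k ∈ Ioc 0 (N / d), ζc k = ∑ k ∈ Ioc 0 (N / d), c k :=
        sum_congr rfl fun k hk => by
          simp only [ζc, coe_mk, zeta_apply_ne (mem_Ioc.1 hk).1.ne', Nat.cast_one, one_mul]
      rw [hζ, ← mul_assoc]
      rfl

theorem sum_Ioc_div_mul_log_eq_sum_vonMangoldt {c : ℕ → ℝ} (hc : ∀ m n, c (m * n) = c m * c n)
    (N j : ℕ) :
    ∑ n ∈ Ioc 0 (N / j), c n * Real.log n =
      ∑ d ∈ Ioc 0 N, Λ d * (c d * ∑ k ∈ Ioc 0 (N / d / j), c k) := by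
  rw [sum_Ioc_mul_log_eq_sum_vonMangoldt hc]
  simp only [Nat.div_right_comm N j]
  refine sum_subset (Ioc_subset_Ioc_right (Nat.div_le_self _ _)) fun d _ hd => ?_
  have hdiv : N / d / j = 0 := by
    rw [Nat.div_right_comm]
    refine Nat.div_eq_of_lt ?_
    simp_all
  simp [hdiv]

theorem sum_vonMangoldt_le_psi_div (N : ℕ) {j : ℕ} (hj : 0 < j) :
    ∑ d ∈ Ioc 0 N with j ≤ N / d, Λ d ≤ Chebyshev.psi (N / j) := by
  refine sum_le_sum_of_subset_of_nonneg (fun d hd => ?_) fun _ _ _ => vonMangoldt_nonneg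
  obtain ⟨hdN, hjd⟩ := mem_filter.1 hd
  have hd0 : 0 < d := (mem_Ioc.1 hdN).1
  rw [Nat.le_div_iff_mul_le hd0] at hjd
  rw [Nat.floor_div_natCast, Nat.floor_natCast, mem_Ioc]
  exact ⟨hd0, (Nat.le_div_iff_mul_le hj).2 (mul_comm d j ▸ hjd)⟩

end DirichletHyperbola

section CharacterSums

open Finset

theorem abs_sum_Ioc_mul_le_of_monotone {c f : ℕ → ℝ} {B : ℝ}
    (hc : ∀ N, |∑ n ∈ Ioc 0 N, c n| ≤ B) (hf : Monotone f) (hf0 : f 0 = 0) (N : ℕ) :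
    |∑ n ∈ Ioc 0 N, c n * f n| ≤ 2 * B * f N := by
  have habel : |∑ n ∈ Ioc 0 N, c n * f n - (∑ n ∈ Ioc 0 N, c n) * f N| ≤ B * f N := by
    induction N with
    | zero => simp [hf0]
    | succ N ih =>
      rw [sum_Ioc_succ_top (Nat.zero_le N), sum_Ioc_succ_top (Nat.zero_le N)]
      have hstep : |(∑ n ∈ Ioc 0 N, c n) * (f (N + 1) - f N)| ≤ B * (f (N + 1) - f N) := by
        rw [abs_mul, abs_of_nonneg (sub_nonneg.2 (hf N.le_succ))]
        exact mul_le_mul_of_nonneg_right (hc N) (sub_nonneg.2 (hf N.le_succ))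
      rw [abs_le] at *
      constructor <;> linarith
  have hbdry : |(∑ n ∈ Ioc 0 N, c n) * f N| ≤ B * f N := by
    have hfN : 0 ≤ f N := hf0 ▸ hf N.zero_le
    rw [abs_mul, abs_of_nonneg hfN]
    exact mul_le_mul_of_nonneg_right (hc N) hfN
  rw [abs_le] at *
  constructor <;> linarith

end CharacterSums

section Chebyshev

open ArithmeticFunction Finset

theorem log_centralBinom_mem_Icc (m : ℕ) :
    Real.log m.centralBinom ∈
      Set.Icc (2 * m * Real.log 2 - Real.log (2 * m + 1)) (2 * m * Real.log 2) := by
  have hpow : Real.log (4 ^ m) = 2 * m * Real.log 2 := by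
    rw [Real.log_pow, show (4 : ℝ) = 2 ^ 2 by norm_num, Real.log_pow]
    push_cast
    ring
  have hpos : (0 : ℝ) < m.centralBinom := by exact_mod_cast m.centralBinom_pos
  rw [← hpow, Set.mem_Icc, sub_le_iff_le_add, ← Real.log_mul hpos.ne' (by positivity)]
  refine ⟨Real.log_le_log (by positivity) ?_, Real.log_le_log hpos ?_⟩
  · rw [mul_comm]
    exact_mod_cast m.four_pow_le_two_mul_add_one_mul_central_binom
  · exact_mod_cast m.centralBinom_le_four_pow

theorem abs_log_factorial_sub_le (N : ℕ) :
    |Real.log N.factorial - 2 * Real.log (N / 2).factorial - N * Real.log 2| ≤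
      Real.log 2 + Real.log (N + 1) := by
  have heven (m : ℕ) : Real.log (2 * m).factorial =
      Real.log m.centralBinom + 2 * Real.log m.factorial := by
    have hfac : (2 * m).factorial = m.centralBinom * m.factorial ^ 2 := by
      rw [two_mul, ← Nat.add_choose_mul_factorial_mul_factorial, Nat.centralBinom, two_mul]
      ring
    rw [hfac, Nat.cast_mul, Real.log_mul, Nat.cast_pow, Real.log_pow]
    · norm_num
    · exact_mod_cast m.centralBinom_ne_zero
    · exact_mod_cast (pow_pos m.factorial_pos 2).ne'
  have hlog2 : 0 ≤ Real.log 2 := Real.log_nonneg one_le_two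
  obtain ⟨m, rfl | rfl⟩ := N.even_or_odd'
  all_goals
    obtain ⟨hlower, hupper⟩ := log_centralBinom_mem_Icc m
    have hnonneg : 0 ≤ Real.log (2 * m + 1) :=
      Real.log_nonneg (by linarith [m.cast_nonneg (α := ℝ)])
  · rw [Nat.mul_div_cancel_left m two_pos, heven, abs_le]
    push_cast
    constructor <;> linarith [hnonneg]
  · have hmono : Real.log (2 * m + 1) ≤ Real.log (2 * m + 1 + 1) :=
      Real.log_le_log (by positivity) (by linarith)
    have hhalf : (2 * m + 1) / 2 = m := by omega
    rw [hhalf, Nat.factorial_succ, Nat.cast_mul, Real.log_mul (by positivity) (by positivity),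
      heven, abs_le]
    push_cast
    constructor <;> linarith

theorem log_factorial_div_eq_sum_vonMangoldt (N j : ℕ) :
    Real.log (N / j).factorial = ∑ d ∈ Ioc 0 N, Λ d * (N / d / j : ℕ) := by
  have hfac (n : ℕ) : Real.log n.factorial = ∑ k ∈ Ioc 0 n, Real.log k := by
    induction n with
    | zero => simp
    | succ n ih =>
      rw [sum_Ioc_succ_top n.zero_le, ← ih, Nat.factorial_succ, Nat.cast_mul,
        Real.log_mul (by positivity) (by positivity), add_comm]
  simpa [hfac] using sum_Ioc_div_mul_log_eq_sum_vonMangoldt (c := fun _ => 1) (by simp) N j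

/-- The summatory function of the nontrivial Dirichlet character modulo `4`. -/
def chiFourSum (N : ℕ) : ℤ := ∑ n ∈ Ioc 0 N, ZMod.χ₄ n

theorem chiFourSum_eq (N : ℕ) : chiFourSum N = if N % 4 = 1 ∨ N % 4 = 2 then 1 else 0 := by
  induction N with
  | zero => simp [chiFourSum]
  | succ N ih =>
    rw [chiFourSum, sum_Ioc_succ_top N.zero_le, ← chiFourSum, ih, ZMod.χ₄_nat_eq_if_mod_four]
    split_ifs <;> omega

/-- The sum of `χ₄ n * log n` over `n ≤ N`. -/
noncomputable def chiFourLogSum (N : ℕ) : ℝ := ∑ n ∈ Ioc 0 N, (ZMod.χ₄ n : ℝ) * Real.log n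

theorem chiFourLogSum_div_eq_sum_vonMangoldt (N j : ℕ) :
    chiFourLogSum (N / j) = ∑ d ∈ Ioc 0 N, Λ d * (ZMod.χ₄ d * chiFourSum (N / d / j)) := by
  rw [chiFourLogSum, sum_Ioc_div_mul_log_eq_sum_vonMangoldt fun m n => by
    rw [Nat.cast_mul, map_mul, Int.cast_mul]]
  simp only [chiFourSum, Int.cast_sum]

theorem abs_chiFourLogSum_le (N : ℕ) : |chiFourLogSum N| ≤ 2 * Real.log N := by
  have hχ (N : ℕ) : |∑ n ∈ Ioc 0 N, (ZMod.χ₄ n : ℝ)| ≤ 1 := by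
    rw [← Int.cast_sum, ← chiFourSum, chiFourSum_eq]
    split_ifs <;> simp
  have hlog : Monotone fun n : ℕ => Real.log n := by
    intro m n hmn
    rcases m.eq_zero_or_pos with rfl | hm
    · simpa using Real.log_natCast_nonneg n
    · exact Real.log_le_log (by positivity) (by exact_mod_cast hmn)
  exact (abs_sum_Ioc_mul_le_of_monotone hχ hlog (by simp) N).trans_eq (by rw [mul_one])

/-- The coefficient of `Λ d`, for `n = ⌊N / d⌋`, in the combination of `∑ log n` and
`∑ χ₄ n * log n` from which Chebyshev's method extracts the primes congruent to `1` modulo `4`. -/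
def chebyshevWeight (d n : ℕ) : ℤ :=
  n - 2 * (n / 2 : ℕ) - (n / 3 : ℕ) + 2 * (n / 6 : ℕ) +
    ZMod.χ₄ d * (chiFourSum n - chiFourSum (n / 2) + chiFourSum (n / 3) - chiFourSum (n / 6))

theorem chebyshevWeight_le (d : ℕ) {n : ℕ} (hn : 0 < n) :
    chebyshevWeight d n ≤
      2 * (if n = 1 ∧ d % 4 ≠ 3 then 1 else 0) + (if 5 ≤ n then 1 else 0) +
        if 11 ≤ n then 1 else 0 := by
  simp only [chebyshevWeight, chiFourSum_eq, ZMod.χ₄_nat_eq_if_mod_four]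
  have h6 : n / 6 = n / 2 / 3 := by omega
  split_ifs <;> omega

theorem sum_vonMangoldt_mul_chebyshevWeight (N : ℕ) :
    ∑ d ∈ Ioc 0 N, Λ d * chebyshevWeight d (N / d) =
      (Real.log N.factorial - 2 * Real.log (N / 2).factorial) -
        (Real.log (N / 3).factorial - 2 * Real.log (N / 3 / 2).factorial) +
      (chiFourLogSum N - chiFourLogSum (N / 2) + chiFourLogSum (N / 3) -
        chiFourLogSum (N / 6)) := by
  have hT := log_factorial_div_eq_sum_vonMangoldt N
  have hS := chiFourLogSum_div_eq_sum_vonMangoldt N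
  have hT1 := hT 1
  have hS1 := hS 1
  simp only [Nat.div_one] at hT1 hS1
  rw [Nat.div_div_eq_div_mul, hT1, hT, hT, hT, hS1, hS, hS, hS]
  simp only [mul_sum, ← sum_sub_distrib, ← sum_add_distrib]
  refine sum_congr rfl fun d _ => ?_
  simp only [chebyshevWeight, Int.cast_add, Int.cast_sub, Int.cast_mul, Int.cast_natCast,
    Int.cast_ofNat]
  ring

theorem le_sum_vonMangoldt_mul_chebyshevWeight {N : ℕ} (hN : 0 < N) :
    2 / 3 * Real.log 2 * N - 12 * Real.log (N + 1) ≤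
      ∑ d ∈ Ioc 0 N, Λ d * chebyshevWeight d (N / d) := by
  have hN1 : (1 : ℝ) ≤ N := by exact_mod_cast hN
  have hlog2 : Real.log 2 ≤ Real.log (N + 1) := Real.log_le_log two_pos (by linarith)
  have hthird : ((N / 3 : ℕ) : ℝ) ≤ N / 3 := Nat.cast_div_le
  have hlog3 : Real.log ((N / 3 : ℕ) + 1) ≤ Real.log (N + 1) :=
    Real.log_le_log (by positivity) (by linarith)
  have hmain : (N / 3 : ℕ) * Real.log 2 ≤ N / 3 * Real.log 2 :=
    mul_le_mul_of_nonneg_right hthird (Real.log_nonneg one_le_two)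
  have hχ (j : ℕ) : |chiFourLogSum (N / j)| ≤ 2 * Real.log (N + 1) := by
    refine (abs_chiFourLogSum_le _).trans ?_
    have hle : ((N / j : ℕ) : ℝ) ≤ N := by exact_mod_cast Nat.div_le_self N j
    rcases (N / j).eq_zero_or_pos with h0 | hpos
    · rw [h0]
      simpa using Real.log_nonneg (by linarith)
    · have : (0 : ℝ) < (N / j : ℕ) := by exact_mod_cast hpos
      linarith [Real.log_le_log this (hle.trans (le_add_of_nonneg_right zero_le_one))]
  have hχ1 := Nat.div_one N ▸ hχ 1
  rw [sum_vonMangoldt_mul_chebyshevWeight]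
  linarith [(abs_le.1 (abs_log_factorial_sub_le N)).1,
    (abs_le.1 (abs_log_factorial_sub_le (N / 3))).2, (abs_le.1 hχ1).1, (abs_le.1 (hχ 2)).2,
    (abs_le.1 (hχ 3)).1, (abs_le.1 (hχ 6)).2]

/-- The primes congruent to `1` modulo `4` in the dyadic interval `(N / 2, N]`. -/
def primesOneModFour (N : ℕ) : Finset ℕ := {p ∈ Ioc (N / 2) N | p.Prime ∧ p % 4 = 1}

theorem sum_vonMangoldt_div_eq_one_le {N : ℕ} (hN : 4 ≤ N) :
    ∑ d ∈ Ioc 0 N with N / d = 1 ∧ d % 4 ≠ 3, Λ d ≤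
      (primesOneModFour N).card * Real.log N + 2 * √N * Real.log N := by
  have hprime : ∑ p ∈ primesOneModFour N, Λ p ≤ (primesOneModFour N).card * Real.log N := by
    rw [← nsmul_eq_mul]
    refine sum_le_card_nsmul _ _ _ fun p hp => ?_
    have hp := mem_Ioc.1 (mem_filter.1 hp).1
    exact vonMangoldt_le_log.trans
      (Real.log_le_log (by exact_mod_cast (by omega)) (by exact_mod_cast hp.2))
  have hpower : ∑ d ∈ Ioc 0 N with ¬ d.Prime, Λ d ≤ 2 * √N * Real.log N := by
    simpa only [Chebyshev.psi_sub_theta_eq_sum_not_prime, Nat.floor_natCast] using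
      Chebyshev.psi_sub_theta_le (x := N) (by exact_mod_cast (by omega : 1 ≤ N))
  rw [← sum_filter_add_sum_filter_not _ Nat.Prime]
  refine add_le_add (le_trans ?_ hprime) (le_trans ?_ hpower)
  · refine sum_le_sum_of_subset_of_nonneg (fun p hp => ?_) fun _ _ _ => vonMangoldt_nonneg
    simp only [mem_filter, mem_Ioc] at hp
    obtain ⟨⟨⟨hp0, hpN⟩, hdiv, hp3⟩, hp⟩ := hp
    have hlt : N < p * (N / p + 1) := Nat.lt_mul_div_succ N hp0
    rw [hdiv] at hlt
    have hodd := hp.eq_two_or_odd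
    simp only [primesOneModFour, mem_filter, mem_Ioc]
    exact ⟨by omega, hp, by omega⟩
  · exact sum_le_sum_of_subset_of_nonneg
      (filter_subset_filter _ (filter_subset _ _)) fun _ _ _ => vonMangoldt_nonneg

theorem sum_vonMangoldt_mul_chebyshevWeight_le {N : ℕ} (hN : 11 ≤ N) :
    ∑ d ∈ Ioc 0 N, Λ d * chebyshevWeight d (N / d) ≤
      2 * (primesOneModFour N).card * Real.log N + 32 / 55 * Real.log 2 * N +
        8 * (√N * Real.log N) := by
  have hpsi {j : ℕ} (hj : 0 < j) (hjN : j ≤ N) :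
      Chebyshev.psi (N / j) ≤ 2 * Real.log 2 * (N / j) + 2 * (√N * Real.log N) := by
    have hj' : (1 : ℝ) ≤ j := by exact_mod_cast hj
    have hq : (1 : ℝ) ≤ N / j := by
      rw [one_le_div₀ (by positivity)]
      exact_mod_cast hjN
    have hle : (N : ℝ) / j ≤ N := div_le_self N.cast_nonneg hj'
    have herr : √(N / j) * Real.log (N / j) ≤ √N * Real.log N := by
      have := Real.log_nonneg hq
      gcongr
    have hlog4 : Real.log 4 = 2 * Real.log 2 := by
      rw [show (4 : ℝ) = 2 ^ 2 by norm_num, Real.log_pow, Nat.cast_ofNat]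
    have := Chebyshev.psi_le hq
    rw [hlog4] at this
    linarith
  have hweight : ∑ d ∈ Ioc 0 N, Λ d * chebyshevWeight d (N / d) ≤
      2 * ∑ d ∈ Ioc 0 N with N / d = 1 ∧ d % 4 ≠ 3, Λ d +
        ∑ d ∈ Ioc 0 N with 5 ≤ N / d, Λ d + ∑ d ∈ Ioc 0 N with 11 ≤ N / d, Λ d := by
    simp only [sum_filter, mul_sum, ← sum_add_distrib]
    refine sum_le_sum fun d hd => ?_
    have hd := mem_Ioc.1 hd
    have hw : (chebyshevWeight d (N / d) : ℝ) ≤ _ :=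
      Int.cast_le.2 (chebyshevWeight_le d (Nat.div_pos hd.2 hd.1))
    refine (mul_le_mul_of_nonneg_left hw vonMangoldt_nonneg).trans_eq ?_
    push_cast
    simp only [mul_add, mul_ite, mul_one, mul_zero]
    ring_nf
  have h5 := (sum_vonMangoldt_le_psi_div N (j := 5) (by norm_num)).trans
    (hpsi (by norm_num) (by omega))
  have h11 := (sum_vonMangoldt_le_psi_div N (j := 11) (by norm_num)).trans
    (hpsi (by norm_num) hN)
  have h1 := sum_vonMangoldt_div_eq_one_le (N := N) (by omega)
  push_cast at h5 h11
  linarith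

theorem isLittleO_sqrt_mul_log :
    (fun x : ℝ => √x * Real.log x) =o[Filter.atTop] fun x => x := by
  have hlog := (Asymptotics.isBigO_refl (fun x : ℝ => √x) Filter.atTop).mul_isLittleO
    (isLittleO_log_rpow_atTop (r := 1 / 2) (by norm_num))
  refine hlog.congr' .rfl ?_
  filter_upwards [Filter.eventually_ge_atTop 0] with x hx
  rw [← Real.sqrt_eq_rpow, Real.mul_self_sqrt hx]

theorem exists_forall_mul_le_card_primesOneModFour_mul_log :
    ∃ c > 0, ∀ᶠ N : ℕ in Filter.atTop, c * N ≤ (primesOneModFour N).card * Real.log N := by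
  -- The main terms differ by `(2 / 3 - 2 * (1 / 5 + 1 / 11)) * log 2 = 14 / 165 * log 2` per unit
  -- of `N`; half of this absorbs the error terms, and the prime count enters with a factor `2`.
  refine ⟨7 / 330 * Real.log 2, by positivity, ?_⟩
  have hsmall := tendsto_natCast_atTop_atTop (R := ℝ) |>.eventually <|
    isLittleO_sqrt_mul_log.bound (c := 7 / 165 * Real.log 2 / 32) (by positivity)
  filter_upwards [hsmall, Filter.eventually_ge_atTop 11] with N hsmall hN
  have hN' : (11 : ℝ) ≤ N := by exact_mod_cast hN
  have hlogN : 0 ≤ Real.log N := Real.log_natCast_nonneg N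
  rw [Real.norm_of_nonneg (by positivity), Real.norm_of_nonneg (by positivity)] at hsmall
  have hsucc : Real.log (N + 1) ≤ 2 * (√N * Real.log N) := by
    have hsq : Real.log (N + 1) ≤ 2 * Real.log N := by
      rw [← Nat.cast_two (R := ℝ), ← Real.log_pow]
      exact Real.log_le_log (by positivity) (by nlinarith)
    have hsqrt : 1 ≤ √(N : ℝ) := Real.one_le_sqrt.2 (by linarith)
    nlinarith
  have hlower := le_sum_vonMangoldt_mul_chebyshevWeight (N := N) (by omega)
  have hupper := sum_vonMangoldt_mul_chebyshevWeight_le hN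
  linarith

end Chebyshev

section GaussianPrimes

open Finset

theorem gnorm_eq_max_toComplex (q : GaussianInt) :
    gnorm q = max |(toComplex q).re| |(toComplex q).im| := by
  simp [gnorm]

theorem gnorm_le_norm_toComplex (q : GaussianInt) : gnorm q ≤ ‖toComplex q‖ :=
  gnorm_eq_max_toComplex q ▸ max_le (abs_re_le_norm _) (abs_im_le_norm _)

theorem norm_toComplex_le_sqrt_two_mul_gnorm (q : GaussianInt) :
    ‖toComplex q‖ ≤ √2 * gnorm q :=
  gnorm_eq_max_toComplex q ▸ norm_le_sqrt_two_mul_max _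

theorem norm_toComplex_le_two_mul_gnorm (q : GaussianInt) : ‖toComplex q‖ ≤ 2 * gnorm q := by
  have hsqrt : √2 ≤ 2 := Real.sqrt_le_iff.2 (by norm_num)
  refine (norm_toComplex_le_sqrt_two_mul_gnorm q).trans ?_
  exact mul_le_mul_of_nonneg_right hsqrt (le_max_of_le_left (abs_nonneg _))

theorem sq_norm_toComplex (q : GaussianInt) : ‖toComplex q‖ ^ 2 = (q.norm : ℝ) := by
  rw [Complex.sq_norm, intCast_real_norm]

theorem one_le_norm_toComplex {q : GaussianInt} (hq : q ≠ 0) : 1 ≤ ‖toComplex q‖ := by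
  rw [← one_le_sq_iff₀ (_root_.norm_nonneg _), sq_norm_toComplex]
  exact_mod_cast norm_pos.2 hq

theorem finite_setOf_norm_toComplex_le (R : ℝ) : {q : GaussianInt | ‖toComplex q‖ ≤ R}.Finite := by
  refine (((Set.finite_Icc (-⌊R⌋) ⌊R⌋).prod (Set.finite_Icc (-⌊R⌋) ⌊R⌋)).image
    fun p => (⟨p.1, p.2⟩ : GaussianInt)).subset fun q hq => ⟨(q.re, q.im), ?_, rfl⟩
  have hre : |q.re| ≤ ⌊R⌋ := Int.le_floor.2 <| by
    simpa using (abs_re_le_norm (toComplex q)).trans hq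
  have him : |q.im| ≤ ⌊R⌋ := Int.le_floor.2 <| by
    simpa using (abs_im_le_norm (toComplex q)).trans hq
  exact ⟨abs_le.1 hre, abs_le.1 him⟩

theorem finite_PM (M : ℝ) : (PM M).Finite :=
  (finite_setOf_norm_toComplex_le (2 * M)).subset fun q hq =>
    (norm_toComplex_le_two_mul_gnorm q).trans (mul_le_mul_of_nonneg_left hq.2.2 zero_le_two)

instance : Finite GaussianIntˣ := by
  have hnorm (u : GaussianIntˣ) : ‖toComplex u‖ ≤ 1 := by
    rw [← sq_le_one_iff₀ (_root_.norm_nonneg _), sq_norm_toComplex,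
      (Zsqrtd.norm_eq_one_iff' (by norm_num) _).2 u.isUnit, Int.cast_one]
  have := (finite_setOf_norm_toComplex_le 1).to_subtype
  exact Finite.of_injective (fun u => (⟨u, hnorm u⟩ : {q | ‖toComplex q‖ ≤ 1}))
    fun u v h => Units.ext (congrArg Subtype.val h)

theorem prime_of_prime_norm {q : GaussianInt} (h : Prime q.norm) : Prime q := by
  have : IsLocalHom (Zsqrtd.normMonoidHom (d := -1)) :=
    ⟨fun z hz => (Zsqrtd.isUnit_iff_norm_isUnit z).2 hz⟩
  exact (Irreducible.of_map (f := Zsqrtd.normMonoidHom) h.irreducible).prime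

theorem mem_PM_of_norm_prime {M : ℝ} {q : GaussianInt} {p : ℕ} (hq : q.norm = p) (hp : p.Prime)
    (hlower : M ^ 2 < 2 * p) (hupper : p ≤ M ^ 2) (hM : 0 ≤ M) : q ∈ PM M := by
  have hsq : ‖toComplex q‖ ^ 2 = p := by rw [sq_norm_toComplex, hq, Int.cast_natCast]
  refine ⟨prime_of_prime_norm (hq ▸ Nat.prime_iff_prime_int.1 hp), ?_, ?_⟩
  · have hle := pow_le_pow_left₀ (_root_.norm_nonneg _) (norm_toComplex_le_sqrt_two_mul_gnorm q) 2
    rw [hsq, mul_pow, Real.sq_sqrt zero_le_two] at hle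
    refine lt_of_pow_lt_pow_left₀ 2 (le_max_of_le_left (abs_nonneg _)) ?_
    change (M / 2) ^ 2 < gnorm q ^ 2
    linarith
  · exact (gnorm_le_norm_toComplex q).trans (le_of_sq_le_sq (hsq.trans_le hupper) hM)

theorem card_primesOneModFour_le_ncard_PM {M : ℝ} (hM : 0 ≤ M) :
    (primesOneModFour ⌊M ^ 2⌋₊).card ≤ (PM M).ncard := by
  have hrepr (p : ℕ) (hp : p ∈ primesOneModFour ⌊M ^ 2⌋₊) : ∃ q ∈ PM M, q.norm = p := by
    simp only [primesOneModFour, mem_filter, mem_Ioc] at hp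
    obtain ⟨⟨hlower, hupper⟩, hprime, hmod⟩ := hp
    have := Fact.mk hprime
    obtain ⟨a, b, hab⟩ := Nat.Prime.sq_add_sq (p := p) (by omega)
    have hnorm : Zsqrtd.norm (⟨a, b⟩ : GaussianInt) = p := by
      rw [← hab, Zsqrtd.norm_def]
      push_cast
      ring
    refine ⟨⟨a, b⟩, mem_PM_of_norm_prime hnorm hprime ?_ ?_ hM, hnorm⟩
    · exact (Nat.lt_floor_add_one _).trans_le (by exact_mod_cast (by omega))
    · exact (Nat.cast_le.2 hupper).trans (Nat.floor_le (sq_nonneg M))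
  choose! q hqM hqp using hrepr
  rw [← Set.ncard_coe_finset]
  refine Set.ncard_le_ncard_of_injOn q hqM (fun p hp p' hp' h => ?_) (finite_PM M)
  exact_mod_cast (hqp p hp).symm.trans (h ▸ hqp p' hp')

theorem exists_forall_mul_sq_le_ncard_PM_mul_log :
    ∃ c > 0, ∀ M : ℝ, 4 ≤ M → (PM M).Nonempty → c * M ^ 2 ≤ (PM M).ncard * Real.log M := by
  obtain ⟨c, hc, hlarge⟩ := exists_forall_mul_le_card_primesOneModFour_mul_log
  obtain ⟨N₀, hN₀⟩ := Filter.eventually_atTop.1 hlarge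
  refine ⟨min (c / 4) (1 / (N₀ + 1)), by positivity, fun M hM hne => ?_⟩
  have hfloor : M ^ 2 < ⌊M ^ 2⌋₊ + 1 := Nat.lt_floor_add_one _
  rcases le_or_gt N₀ ⌊M ^ 2⌋₊ with hN | hN
  · have hhalf : M ^ 2 / 2 ≤ ⌊M ^ 2⌋₊ := by nlinarith
    have hlog : Real.log ⌊M ^ 2⌋₊ ≤ 2 * Real.log M := by
      rw [← Nat.cast_two (R := ℝ), ← Real.log_pow]
      exact Real.log_le_log (by nlinarith) (Nat.floor_le (sq_nonneg M))
    have hcard : ((primesOneModFour ⌊M ^ 2⌋₊).card : ℝ) ≤ (PM M).ncard := by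
      exact_mod_cast card_primesOneModFour_le_ncard_PM (by linarith)
    have hcM := (hN₀ _ hN).trans (mul_le_mul hcard hlog (Real.log_natCast_nonneg _) (by positivity))
    have hmin := mul_le_mul_of_nonneg_right (min_le_left (c / 4) (1 / (N₀ + 1 : ℝ))) (sq_nonneg M)
    nlinarith
  · have hlog : 1 ≤ Real.log M := by
      rw [Real.le_log_iff_exp_le (by linarith)]
      linarith [Real.exp_one_lt_three]
    have hcard : (1 : ℝ) ≤ (PM M).ncard := by
      exact_mod_cast (Set.ncard_pos (finite_PM M)).2 hne
    have hM2 : 1 / (N₀ + 1) * M ^ 2 ≤ 1 := by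
      rw [one_div_mul_eq_div, div_le_one (by positivity)]
      have : (⌊M ^ 2⌋₊ : ℝ) ≤ N₀ := by exact_mod_cast hN.le
      linarith
    calc min (c / 4) (1 / (N₀ + 1 : ℝ)) * M ^ 2 ≤ 1 / (N₀ + 1) * M ^ 2 :=
          mul_le_mul_of_nonneg_right (min_le_right _ _) (sq_nonneg M)
      _ ≤ 1 := hM2
      _ ≤ (PM M).ncard * Real.log M := one_le_mul_of_one_le_of_one_le hcard hlog

end GaussianPrimes

section PrimeDivisors

theorem map_eq_of_associated {R : Type*} [CommMonoidWithZero R] [Nontrivial R] {N : R →* ℝ}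
    (hN : ∀ x ≠ 0, 1 ≤ N x) {x y : R} (h : Associated x y) : N x = N y := by
  obtain ⟨u, rfl⟩ := h
  have hu := hN u u.ne_zero
  have hv := hN ↑u⁻¹ u⁻¹.ne_zero
  have huv : N u * N ↑u⁻¹ = 1 := by rw [← map_mul, Units.mul_inv, map_one]
  have hu1 : N u = 1 := by nlinarith
  rw [map_mul, hu1, mul_one]

variable {R : Type*} [CommMonoidWithZero R] [Finite Rˣ] {N : R →* ℝ} {B : ℝ}

theorem card_mul_log_le_of_forall_associated (hN : ∀ x ≠ 0, 1 ≤ N x) {p : R}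
    (hp : p ≠ 0) (hB : 1 ≤ B) (s : Finset R) (hs : ∀ q ∈ s, Associated p q ∧ B ≤ N q) :
    s.card * Real.log B ≤ Nat.card Rˣ * Real.log (N p) := by
  have : Nontrivial R := ⟨p, 0, hp⟩
  have hlogB : 0 ≤ Real.log B := Real.log_nonneg hB
  rcases s.eq_empty_or_nonempty with rfl | ⟨q, hq⟩
  · have := Real.log_nonneg (hN p hp)
    simp only [Finset.card_empty, Nat.cast_zero, zero_mul]
    positivity
  have hBp : B ≤ N p := (hs q hq).2.trans_eq (map_eq_of_associated hN (hs q hq).1).symm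
  have hcard : s.card ≤ Nat.card Rˣ := by
    choose! u hu using fun q (hq : q ∈ s) => (hs q hq).1
    have hinj : Function.Injective fun q : s => u q := fun q q' (h : u q = u q') =>
      Subtype.ext <| (hu q q.2).symm.trans <| (congrArg (p * ·.val) h).trans (hu q' q'.2)
    simpa using Nat.card_le_card_of_injective _ hinj
  gcongr

theorem card_mul_log_le_of_forall_prime_dvd [UniqueFactorizationMonoid R]
    (hN : ∀ x ≠ 0, 1 ≤ N x) (hB : 1 ≤ B) {x : R} (hx : x ≠ 0) (s : Finset R)
    (hs : ∀ q ∈ s, Prime q ∧ B ≤ N q ∧ q ∣ x) :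
    s.card * Real.log B ≤ Nat.card Rˣ * Real.log (N x) := by
  classical
  induction x using UniqueFactorizationMonoid.induction_on_prime generalizing s with
  | h₁ => exact absurd rfl hx
  | h₂ x hunit =>
    have hempty : s = ∅ := Finset.eq_empty_of_forall_notMem fun q hq =>
      (hs q hq).1.not_isUnit (isUnit_of_dvd_unit (hs q hq).2.2 hunit)
    have := Real.log_nonneg (hN x hx)
    simp only [hempty, Finset.card_empty, Nat.cast_zero, zero_mul]
    positivity
  | h₃ a p ha hp ih =>
    have hdvd := ih ha (s.filter (· ∣ a)) fun q hq => by
      obtain ⟨hqs, hqa⟩ := Finset.mem_filter.1 hq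
      exact ⟨(hs q hqs).1, (hs q hqs).2.1, hqa⟩
    have hassoc := card_mul_log_le_of_forall_associated hN hp.ne_zero hB (s.filter (¬ · ∣ a))
      fun q hq => by
        obtain ⟨hqs, hqa⟩ := Finset.mem_filter.1 hq
        obtain ⟨hq, hBq, hqpa⟩ := hs q hqs
        exact ⟨(hq.associated_of_dvd hp ((hq.dvd_or_dvd hqpa).resolve_right hqa)).symm, hBq⟩
    have hNp := hN p hp.ne_zero
    have hNa := hN a ha
    rw [map_mul, Real.log_mul (by positivity) (by positivity),
      ← Finset.card_filter_add_card_filter_not (s := s) (· ∣ a)]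
    push_cast
    linarith

end PrimeDivisors

theorem ncard_PM_star_dvd_mul_log_le {M : ℝ} (hM : 4 ≤ M) {ℓ : GaussianInt} (hℓ : 2 ≤ gnorm ℓ) :
    {q ∈ PM M | star q ∣ ℓ}.ncard * Real.log M ≤
      4 * Nat.card GaussianIntˣ * Real.log (gnorm ℓ) := by
  have hℓ0 : ℓ ≠ 0 := by
    rintro rfl
    simp [gnorm] at hℓ
    linarith
  let N : GaussianInt →* ℝ := (normHom : ℂ →*₀ ℝ).toMonoidHom.comp toComplex.toMonoidHom
  have hfin := (finite_PM M).subset (Set.sep_subset (PM M) fun q => star q ∣ ℓ)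
  have hcard := card_mul_log_le_of_forall_prime_dvd (N := N) (B := M / 2)
    (fun x hx => one_le_norm_toComplex hx) (by linarith) (star_ne_zero.2 hℓ0) hfin.toFinset
    fun q hq => by
      obtain ⟨⟨hprime, hlower, -⟩, hdvd⟩ := hfin.mem_toFinset.1 hq
      exact ⟨hprime, hlower.le.trans (gnorm_le_norm_toComplex q),
        by simpa [starRingEnd_apply] using map_dvd (starRingEnd GaussianInt) hdvd⟩
  rw [← Set.ncard_eq_toFinset_card _ hfin] at hcard
  have hM2 : Real.log M ≤ 2 * Real.log (M / 2) := by
    rw [← Nat.cast_two (R := ℝ), ← Real.log_pow]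
    exact Real.log_le_log (by positivity) (by push_cast; nlinarith)
  have hNℓ : Real.log (N (star ℓ)) ≤ 2 * Real.log (gnorm ℓ) := by
    have hN : N (star ℓ) = ‖toComplex ℓ‖ := by
      change ‖toComplex (star ℓ)‖ = _
      rw [toComplex_star, norm_conj]
    rw [hN, ← Nat.cast_two (R := ℝ), ← Real.log_pow]
    refine Real.log_le_log (by linarith [one_le_norm_toComplex hℓ0]) ?_
    nlinarith [norm_toComplex_le_two_mul_gnorm ℓ]
  nlinarith [Nat.cast_nonneg (α := ℝ) (Nat.card GaussianIntˣ),
    Nat.cast_nonneg (α := ℝ) {q ∈ PM M | star q ∣ ℓ}.ncard]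

section UnitSquare

theorem unitSquare_eq_preimage :
    unitSquare = measurableEquivRealProd ⁻¹' (Set.Icc (0 : ℝ) 1 ×ˢ Set.Icc (0 : ℝ) 1) :=
  rfl

theorem isCompact_unitSquare : IsCompact unitSquare :=
  isCompact_Icc.reProdIm isCompact_Icc

theorem volume_unitSquare : volume unitSquare = 1 := by
  rw [unitSquare_eq_preimage, volume_preserving_equiv_real_prod.measure_preimage
    (measurableSet_Icc.prod measurableSet_Icc).nullMeasurableSet, Measure.volume_eq_prod,
    Measure.prod_prod]
  simp

theorem unitSquare_ae_eq_fundamentalDomain :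
    unitSquare =ᵐ[volume] ZSpan.fundamentalDomain basisOneI := by
  have hIco : ZSpan.fundamentalDomain basisOneI =
      measurableEquivRealProd ⁻¹' (Set.Ico (0 : ℝ) 1 ×ˢ Set.Ico (0 : ℝ) 1) := by
    ext z
    simp [ZSpan.mem_fundamentalDomain, measurableEquivRealProd_apply, Fin.forall_fin_two]
  rw [unitSquare_eq_preimage, hIco]
  exact volume_preserving_equiv_real_prod.quasiMeasurePreserving.preimage_ae_eq
    (Measure.set_prod_ae_eq Ico_ae_eq_Icc.symm Ico_ae_eq_Icc.symm)

theorem span_range_basisOneI_eq_range_toComplex :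
    (Submodule.span ℤ (Set.range basisOneI)).toAddSubgroup =
      toComplex.toAddMonoidHom.range := by
  ext z
  rw [Submodule.mem_toAddSubgroup, coe_basisOneI, Matrix.range_cons_cons_empty,
    Submodule.mem_span_pair]
  constructor
  · rintro ⟨m, n, rfl⟩
    exact ⟨⟨m, n⟩, by simp [toComplex_def]⟩
  · rintro ⟨r, rfl⟩
    exact ⟨r.re, r.im, by simp [toComplex_def]⟩

theorem isAddFundamentalDomain_range_toComplex :
    IsAddFundamentalDomain toComplex.toAddMonoidHom.range
      (ZSpan.fundamentalDomain basisOneI) (volume : Measure ℂ) :=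
  span_range_basisOneI_eq_range_toComplex ▸ ZSpan.isAddFundamentalDomain' basisOneI volume

instance : Countable GaussianInt :=
  Function.Injective.countable (f := fun q : GaussianInt => (q.re, q.im)) fun a b h => by
    simpa [Zsqrtd.ext_iff] using h

/-- The additive equivalence between `ℤ[i]` and the lattice of Gaussian integers in `ℂ`, through
which sums over the lattice are indexed by `ℤ[i]`. -/
noncomputable def toComplexRangeEquiv : GaussianInt ≃+ toComplex.toAddMonoidHom.range :=
  AddMonoidHom.ofInjective toComplex_injective

instance : Countable toComplex.toAddMonoidHom.range :=
  toComplexRangeEquiv.symm.injective.countable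

theorem setIntegral_unitSquare_add_right {E : Type*} [NormedAddCommGroup E] [NormedSpace ℝ E]
    {H : ℂ → E} (hH : ∀ r : GaussianInt, Function.Periodic H (toComplex r)) (w : ℂ) :
    ∫ x in unitSquare, H (x + w) = ∫ x in unitSquare, H x := by
  have hD := isAddFundamentalDomain_range_toComplex
  rw [setIntegral_congr_set unitSquare_ae_eq_fundamentalDomain,
    setIntegral_congr_set unitSquare_ae_eq_fundamentalDomain]
  rw [hD.setIntegral_eq (hD.vadd_of_comm w) (f := H), ← Set.image_vadd,
    (measurePreserving_vadd w volume).setIntegral_image_emb (measurableEmbedding_const_vadd w)]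
  · simp only [vadd_eq_add, add_comm w]
  · rintro ⟨_, r, rfl⟩ x
    rw [AddSubgroup.vadd_def, vadd_eq_add, add_comm]
    exact hH r x

theorem setIntegral_unitSquare_comp_mul {E : Type*} [NormedAddCommGroup E] [NormedSpace ℝ E]
    [CompleteSpace E] {H : ℂ → E} (hcont : Continuous H)
    (hH : ∀ r : GaussianInt, Function.Periodic H (toComplex r)) {q : GaussianInt} (hq : q ≠ 0) :
    ∫ x in unitSquare, H (toComplex q * x) = ∫ x in unitSquare, H x := by
  have hq0 : toComplex q ≠ 0 := toComplex_eq_zero.not.2 hq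
  have hprob : IsProbabilityMeasure (volume.restrict unitSquare) :=
    ⟨by rw [Measure.restrict_apply_univ, volume_unitSquare]⟩
  have hshift (y : ℂ) : ∫ x in unitSquare, H (y + toComplex q * x) =
      ∫ x in unitSquare, H (toComplex q * x) := by
    rw [← setIntegral_unitSquare_add_right (H := fun x => H (toComplex q * x)) _ (y / toComplex q)]
    · simp only [mul_add, mul_div_cancel₀ _ hq0, add_comm]
    · intro r x
      simp only [mul_add, ← map_mul]
      exact hH (q * r) _
  have hint : Integrable (Function.uncurry fun y x => H (y + toComplex q * x))
      ((volume.restrict unitSquare).prod (volume.restrict unitSquare)) := by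
    rw [Measure.prod_restrict]
    exact ContinuousOn.integrableOn_compact (isCompact_unitSquare.prod isCompact_unitSquare)
      (by fun_prop)
  calc ∫ x in unitSquare, H (toComplex q * x)
    _ = ∫ y in unitSquare, ∫ x in unitSquare, H (y + toComplex q * x) := by simp [hshift]
    _ = ∫ x in unitSquare, ∫ y in unitSquare, H (y + toComplex q * x) :=
      integral_integral_swap hint
    _ = ∫ x in unitSquare, H x := by simp [setIntegral_unitSquare_add_right hH]

end UnitSquare

section Periodization

/-- The `ℤ[i]`-periodization `∑_{r ∈ ℤ[i]} g (x - r)` of a function on `ℂ`, of which `Phi` is the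
instance where `g` is a rescaled bump function. -/
noncomputable def periodize {E : Type*} [AddCommMonoid E] [TopologicalSpace E]
    (g : ℂ → E) (x : ℂ) : E :=
  ∑' r : GaussianInt, g (x - toComplex r)

theorem periodic_periodize {E : Type*} [AddCommMonoid E] [TopologicalSpace E]
    (g : ℂ → E) (s : GaussianInt) : Function.Periodic (periodize g) (toComplex s) := fun x => by
  rw [periodize, ← (Equiv.addRight s).tsum_eq]
  simp [periodize]

variable {E : Type*} [NormedAddCommGroup E] {g : ℂ → E}

theorem locallyFinite_support_comp_sub_toComplex (hg : HasCompactSupport g) :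
    LocallyFinite fun r : GaussianInt => Function.support fun x => g (x - toComplex r) := by
  obtain ⟨R, hR⟩ := hg.isCompact.isBounded.exists_norm_le
  refine fun x => ⟨Metric.ball x 1, Metric.ball_mem_nhds x one_pos,
    (finite_setOf_norm_toComplex_le (‖x‖ + 1 + R)).subset ?_⟩
  rintro r ⟨y, hy, hyx⟩
  have hr := hR _ (subset_tsupport g hy)
  have hy : ‖y‖ ≤ ‖x‖ + 1 := by
    have := norm_le_norm_add_norm_sub' y x
    rw [mem_ball_iff_norm] at hyx
    linarith
  have := norm_sub_norm_le (toComplex r) y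
  rw [norm_sub_rev] at this
  exact (by linarith : ‖toComplex r‖ ≤ ‖x‖ + 1 + R)

theorem continuous_periodize (hcont : Continuous g) (hg : HasCompactSupport g) :
    Continuous (periodize g) := by
  have hfin := locallyFinite_support_comp_sub_toComplex hg
  refine (continuous_finsum (fun r => hcont.comp (continuous_sub_right (toComplex r))) hfin).congr
    fun x => (tsum_eq_finsum (hfin.point_finite x)).symm

theorem setIntegral_unitSquare_periodize [NormedSpace ℝ E] (hg : Integrable g) :
    ∫ x in unitSquare, periodize g x = ∫ x, g x := by
  have hD := isAddFundamentalDomain_range_toComplex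
  let e := (Equiv.neg GaussianInt).trans toComplexRangeEquiv.toEquiv
  have he (r : GaussianInt) (x : ℂ) : e r +ᵥ x = x - toComplex r := by
    change toComplex (-r) + x = _
    rw [map_neg]
    ring
  rw [setIntegral_congr_set unitSquare_ae_eq_fundamentalDomain, hD.integral_eq_tsum'' g hg,
    ← e.tsum_eq]
  simp only [he, periodize]
  refine integral_tsum (fun r => (hg.comp_sub_right _).aestronglyMeasurable.restrict) ?_
  have hlint := hD.lintegral_eq_tsum'' (fun x => ‖g x‖ₑ)
  rw [← e.tsum_eq] at hlint
  simp only [he] at hlint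
  exact hlint ▸ hg.2.ne

end Periodization

section Characters

theorem ec_eq_fourierChar (t : ℝ) : ec t = Real.fourierChar (-t) := by
  rw [ec, Real.fourierChar_apply]
  push_cast
  ring_nf

theorem ec_add (s t : ℝ) : ec (s + t) = ec s * ec t := by
  rw [ec, ec, ec, ← Complex.exp_add]
  push_cast
  ring_nf

theorem ec_eq_one_iff (t : ℝ) : ec t = 1 ↔ ∃ n : ℤ, t = n := by
  rw [ec, Complex.exp_eq_one_iff]
  constructor
  · rintro ⟨n, hn⟩
    refine ⟨-n, ?_⟩
    have : (t : ℂ) = ((-n : ℤ) : ℂ) := mul_left_cancel₀ two_pi_I_ne_zero <| by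
      push_cast
      linear_combination -hn
    exact_mod_cast this
  · rintro ⟨n, rfl⟩
    exact ⟨-n, by push_cast; ring⟩

theorem continuous_ec_inn (ξ : ℂ) : Continuous fun x => ec (inn ξ x) := by
  unfold ec inn
  fun_prop

theorem inn_eq_inner (ξ x : ℂ) : inn ξ x = inner ℝ x ξ := by
  simp [inn, Complex.inner]

theorem inn_add_right (ξ x y : ℂ) : inn ξ (x + y) = inn ξ x + inn ξ y := by
  simp only [inn, add_re, add_im]
  ring

theorem inn_mul_right (ξ z x : ℂ) : inn ξ (z * x) = inn (starRingEnd ℂ z * ξ) x := by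
  simp only [inn, mul_re, mul_im, conj_re, conj_im]
  ring

theorem ec_inn_toComplex (k r : GaussianInt) : ec (inn (toComplex k) (toComplex r)) = 1 :=
  (ec_eq_one_iff _).2 ⟨k.re * r.re + k.im * r.im, by simp [inn]⟩

theorem periodic_ec_inn (k r : GaussianInt) :
    Function.Periodic (fun x => ec (inn (toComplex k) x)) (toComplex r) := fun x => by
  simp only [inn_add_right, ec_add, ec_inn_toComplex, mul_one]

end Characters

section FourierCoefficients

theorem fcoeff_periodize {g : ℂ → ℂ} (hg : Integrable g) (k : GaussianInt) :
    fcoeff (periodize g) (toComplex k) = ftr g (toComplex k) := by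
  have hmul (x : ℂ) : ec (inn (toComplex k) x) * periodize g x =
      periodize (fun y => ec (inn (toComplex k) y) * g y) x := by
    simp only [periodize, (periodic_ec_inn k _).sub_eq, tsum_mul_left]
  simp only [fcoeff, ftr, hmul]
  refine setIntegral_unitSquare_periodize (hg.bdd_mul (c := 1)
    (continuous_ec_inn _).aestronglyMeasurable (.of_forall fun x => ?_))
  rw [ec_eq_fourierChar, Circle.norm_coe]

theorem fcoeff_comp_mul {H : ℂ → ℂ} (hcont : Continuous H)
    (hH : ∀ r : GaussianInt, Function.Periodic H (toComplex r)) {q : GaussianInt} (hq : q ≠ 0)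
    (k : GaussianInt) :
    fcoeff (fun x => H (toComplex q * x)) (toComplex (star q * k)) = fcoeff H (toComplex k) := by
  simp only [fcoeff, map_mul, toComplex_star, ← inn_mul_right]
  exact setIntegral_unitSquare_comp_mul (H := fun x => ec (inn (toComplex k) x) * H x)
    ((continuous_ec_inn _).mul hcont) (fun r => (periodic_ec_inn k r).mul (hH r)) hq

theorem star_dvd_of_forall_ec_eq_one {q ℓ : GaussianInt} (hq : q ≠ 0)
    (h : ∀ r : GaussianInt, ec (inn (toComplex ℓ) ((toComplex q)⁻¹ * toComplex r)) = 1) :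
    star q ∣ ℓ := by
  have hq0 : toComplex (star q) ≠ 0 := toComplex_eq_zero.not.2 (star_ne_zero.2 hq)
  simp only [inn_mul_right, ec_eq_one_iff, map_inv₀, ← toComplex_star] at h
  obtain ⟨m, hm⟩ := h 1
  obtain ⟨n, hn⟩ := h ⟨0, 1⟩
  refine ⟨⟨m, n⟩, toComplex_injective ?_⟩
  have hquot : (toComplex (star q))⁻¹ * toComplex ℓ = toComplex ⟨m, n⟩ := by
    apply Complex.ext
    · simpa [inn] using hm
    · simpa [inn] using hn
  rw [map_mul, ← hquot, mul_inv_cancel_left₀ hq0]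

theorem star_dvd_of_fcoeff_comp_mul_ne_zero {H : ℂ → ℂ}
    (hH : ∀ r : GaussianInt, Function.Periodic H (toComplex r)) {q ℓ : GaussianInt} (hq : q ≠ 0)
    (h : fcoeff (fun x => H (toComplex q * x)) (toComplex ℓ) ≠ 0) : star q ∣ ℓ := by
  have hq0 : toComplex q ≠ 0 := toComplex_eq_zero.not.2 hq
  refine star_dvd_of_forall_ec_eq_one hq fun r => mul_right_cancel₀ h ?_
  have hshift := setIntegral_unitSquare_add_right
    (H := fun x => ec (inn (toComplex ℓ) x) * H (toComplex q * x))
    (fun s => (periodic_ec_inn ℓ s).mul fun x => by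
      simpa only [mul_add, map_mul] using hH (q * s) (toComplex q * x))
    ((toComplex q)⁻¹ * toComplex r)
  rw [one_mul, fcoeff, ← integral_const_mul, ← hshift]
  congr! 2
  rw [inn_add_right, ec_add, mul_add, mul_inv_cancel_left₀ hq0, hH r]
  ring

end FourierCoefficients

section FourierDecay

theorem ftr_eq_fourier (f : ℂ → ℂ) : ftr f = FourierTransform.fourier f := by
  ext ξ
  rw [ftr, Real.fourier_eq]
  simp only [ec_eq_fourierChar, inn_eq_inner, Circle.smul_def, smul_eq_mul]

theorem ftr_dilation (f : ℂ → ℂ) {ε : ℝ} (hε : ε ≠ 0) (ξ : ℂ) :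
    ftr (fun x => (ε : ℂ)⁻¹ ^ 2 * f (ε⁻¹ • x)) ξ = ftr f (ε • ξ) := by
  have hinn (x : ℂ) : inn ξ x = inn (ε • ξ) (ε⁻¹ • x) := by
    simp only [inn_eq_inner, real_inner_smul_left, real_inner_smul_right]
    field_simp
  have hscale := Measure.integral_comp_smul volume
    (fun x : ℂ => ec (inn (ε • ξ) x) * f x) ε⁻¹
  simp only [ftr, hinn, mul_left_comm _ ((ε : ℂ)⁻¹ ^ 2), integral_const_mul, hscale,
    finrank_real_complex]
  rw [abs_of_pos (by positivity), Complex.real_smul]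
  push_cast
  rw [inv_pow, inv_inv, inv_mul_cancel_left₀ (by exact_mod_cast pow_ne_zero 2 hε)]

theorem exists_forall_pow_mul_norm_ftr_le {n : ℕ} {f : ℂ → ℂ} (hf : ContDiff ℝ n f)
    (hfc : HasCompactSupport f) : ∃ C, ∀ ξ, ‖ξ‖ ^ n * ‖ftr f ξ‖ ≤ C := by
  have hbound (ξ : ℂ) := Real.pow_mul_norm_iteratedFDeriv_fourier_le (K := 0) (N := n) hf
    (fun k m _ hm => ?_) (k := 0) le_rfl (n := n) le_rfl ξ
  · simp only [norm_iteratedFDeriv_zero, ← ftr_eq_fourier] at hbound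
    exact ⟨_, hbound⟩
  have hcont := hf.continuous_iteratedFDeriv (m := m) (by exact_mod_cast hm)
  exact Continuous.integrable_of_hasCompactSupport (by fun_prop)
    ((hfc.iteratedFDeriv m).norm.mul_left)

theorem exists_forall_rpow_mul_norm_ftr_le {K : ℕ} {f : ℂ → ℂ} (hf : ContDiff ℝ K f)
    (hfc : HasCompactSupport f) {a : ℝ} (ha : 0 ≤ a) (haK : a ≤ K) :
    ∃ C, ∀ ξ, ‖ξ‖ ^ a * ‖ftr f ξ‖ ≤ C := by
  obtain ⟨C₀, hC₀⟩ := exists_forall_pow_mul_norm_ftr_le (n := 0)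
    (hf.of_le (by simp)) hfc
  obtain ⟨C₁, hC₁⟩ := exists_forall_pow_mul_norm_ftr_le hf hfc
  refine ⟨max C₀ C₁, fun ξ => ?_⟩
  rcases le_total ‖ξ‖ 1 with hξ | hξ
  · refine le_max_of_le_left (le_trans ?_ (hC₀ ξ))
    gcongr
    rw [pow_zero]
    exact Real.rpow_le_one (_root_.norm_nonneg ξ) hξ ha
  · refine le_max_of_le_right (le_trans ?_ (hC₁ ξ))
    gcongr
    exact (Real.rpow_le_rpow_of_exponent_le hξ haK).trans_eq (Real.rpow_natCast _ _)

end FourierDecay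

section PrimeAverages

variable {φ : ℂ → ℝ}

theorem ofReal_Phi_eq_periodize (φ : ℂ → ℝ) (ε : ℝ) :
    (fun x => (Phi φ ε x : ℂ)) = periodize fun x => (ε : ℂ)⁻¹ ^ 2 * φ (ε⁻¹ • x) := by
  ext x
  rw [Phi, ofReal_tsum, periodize]
  push_cast
  rfl

theorem hasCompactSupport_const_mul_comp_inv_smul (hφc : HasCompactSupport φ) {ε : ℝ}
    (hε : ε ≠ 0) : HasCompactSupport fun x => (ε : ℂ)⁻¹ ^ 2 * φ (ε⁻¹ • x) :=
  ((hφc.comp_smul (inv_ne_zero hε)).comp_left (g := ((↑) : ℝ → ℂ)) ofReal_zero).mul_left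

theorem continuous_ofReal_Phi (hφ : Continuous φ) (hφc : HasCompactSupport φ) {ε : ℝ}
    (hε : ε ≠ 0) : Continuous fun x => (Phi φ ε x : ℂ) := by
  rw [ofReal_Phi_eq_periodize]
  exact continuous_periodize (by fun_prop) (hasCompactSupport_const_mul_comp_inv_smul hφc hε)

theorem periodic_ofReal_Phi (φ : ℂ → ℝ) (ε : ℝ) (r : GaussianInt) :
    Function.Periodic (fun x => (Phi φ ε x : ℂ)) (toComplex r) :=
  ofReal_Phi_eq_periodize φ ε ▸ periodic_periodize _ r

theorem fcoeff_Phi_comp_mul (hφ : Continuous φ) (hφc : HasCompactSupport φ) {ε : ℝ}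
    (hε : ε ≠ 0) {q : GaussianInt} (hq : q ≠ 0) (k : GaussianInt) :
    fcoeff (fun x => (Phi φ ε (toComplex q * x) : ℂ)) (toComplex (star q * k)) =
      ftr (fun x => (φ x : ℂ)) (ε • toComplex k) := by
  have hg := hasCompactSupport_const_mul_comp_inv_smul hφc hε
  rw [fcoeff_comp_mul (continuous_ofReal_Phi hφ hφc hε) (periodic_ofReal_Phi φ ε) hq,
    ofReal_Phi_eq_periodize, fcoeff_periodize (Continuous.integrable_of_hasCompactSupport
      (by fun_prop) hg), ftr_dilation (fun x => (φ x : ℂ)) hε]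

theorem gnorm_star_mul_le {M : ℝ} (hM : 0 < M) (τ : ℝ) {q k : GaussianInt} (hq : gnorm q ≤ M) :
    gnorm (star q * k) ≤ 4 * M ^ (1 + τ) * ‖(M ^ (-τ) / 2) • toComplex k‖ := by
  have hscale : 4 * M ^ (1 + τ) * ‖(M ^ (-τ) / 2) • toComplex k‖ = 2 * M * ‖toComplex k‖ := by
    rw [norm_smul, Real.norm_of_nonneg (by positivity), Real.rpow_add hM, Real.rpow_one,
      Real.rpow_neg hM.le]
    field_simp
    ring
  calc gnorm (star q * k)
    _ ≤ ‖toComplex (star q * k)‖ := gnorm_le_norm_toComplex _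
    _ = ‖toComplex q‖ * ‖toComplex k‖ := by
      rw [map_mul, norm_mul, toComplex_star, norm_conj]
    _ ≤ 2 * M * ‖toComplex k‖ := by
      gcongr
      linarith [norm_toComplex_le_two_mul_gnorm q]
    _ = _ := hscale.symm

theorem rpow_gnorm_mul_norm_fcoeff_Phi_comp_mul_le (hφ : Continuous φ)
    (hφc : HasCompactSupport φ) {τ M C : ℝ} (hτ : -1 < τ) (hM : 0 < M)
    (hC : ∀ ξ, ‖ξ‖ ^ (2 / (1 + τ)) * ‖ftr (fun x => (φ x : ℂ)) ξ‖ ≤ C) {q : GaussianInt}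
    (hq : q ≠ 0) (hqM : gnorm q ≤ M) {ℓ : GaussianInt} (hdvd : star q ∣ ℓ) :
    gnorm ℓ ^ (2 / (1 + τ)) *
        ‖fcoeff (fun x => (Phi φ (M ^ (-τ) / 2) (toComplex q * x) : ℂ)) (toComplex ℓ)‖ ≤
      4 ^ (2 / (1 + τ)) * C * M ^ 2 := by
  have hτ0 : 0 < 1 + τ := by linarith
  obtain ⟨k, rfl⟩ := hdvd
  rw [fcoeff_Phi_comp_mul hφ hφc (by positivity) hq]
  set ξ := (M ^ (-τ) / 2) • toComplex k
  have hMpow : (M ^ (1 + τ)) ^ (2 / (1 + τ)) = M ^ 2 := by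
    rw [← Real.rpow_mul hM.le, mul_div_cancel₀ _ hτ0.ne', Real.rpow_two]
  have hgnorm : 0 ≤ gnorm (star q * k) := (abs_nonneg _).trans (le_max_left _ _)
  calc gnorm (star q * k) ^ (2 / (1 + τ)) * ‖ftr (fun x => (φ x : ℂ)) ξ‖
    _ ≤ (4 * M ^ (1 + τ) * ‖ξ‖) ^ (2 / (1 + τ)) * ‖ftr (fun x => (φ x : ℂ)) ξ‖ := by
      gcongr
      exact gnorm_star_mul_le hM τ hqM
    _ = 4 ^ (2 / (1 + τ)) * M ^ 2 *
        (‖ξ‖ ^ (2 / (1 + τ)) * ‖ftr (fun x => (φ x : ℂ)) ξ‖) := by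
      rw [Real.mul_rpow (by positivity) (by positivity), Real.mul_rpow (by positivity)
        (by positivity), hMpow]
      ring
    _ ≤ 4 ^ (2 / (1 + τ)) * M ^ 2 * C := by
      gcongr
      exact hC ξ
    _ = 4 ^ (2 / (1 + τ)) * C * M ^ 2 := by ring

theorem fcoeff_FMP (hφ : Continuous φ) (hφc : HasCompactSupport φ) (τ : ℝ) {M : ℝ} (hM : 0 < M)
    (ξ : ℂ) : fcoeff (fun x => (FMP φ τ M x : ℂ)) ξ = ((PM M).ncard : ℂ)⁻¹ *
      ∑ q ∈ (finite_PM M).toFinset,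
        fcoeff (fun x => (Phi φ (M ^ (-τ) / 2) (toComplex q * x) : ℂ)) ξ := by
  have hFMP (x : ℂ) : (FMP φ τ M x : ℂ) = ((PM M).ncard : ℂ)⁻¹ *
      ∑ q ∈ (finite_PM M).toFinset, (Phi φ (M ^ (-τ) / 2) (toComplex q * x) : ℂ) := by
    have := Finset.tsum_subtype' (finite_PM M).toFinset
      fun q => Phi φ (M ^ (-τ) / 2) (toComplex q * x)
    rw [(finite_PM M).coe_toFinset] at this
    rw [FMP, this]
    push_cast
    rfl
  have hcont := continuous_ofReal_Phi hφ hφc (ε := M ^ (-τ) / 2) (by positivity)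
  simp only [fcoeff, hFMP, mul_left_comm (ec _), Finset.mul_sum]
  rw [integral_finsetSum _ fun q _ => ?_]
  · simp only [integral_const_mul]
  · have hq := (continuous_ec_inn ξ).mul (hcont.comp (continuous_const_mul (toComplex q)))
    exact (hq.continuousOn.integrableOn_compact isCompact_unitSquare).const_mul _

theorem rpow_gnorm_mul_norm_fcoeff_FMP_le (hφ : Continuous φ) (hφc : HasCompactSupport φ)
    {τ M C : ℝ} (hτ : -1 < τ) (hM : 0 < M)
    (hC : ∀ ξ, ‖ξ‖ ^ (2 / (1 + τ)) * ‖ftr (fun x => (φ x : ℂ)) ξ‖ ≤ C) (ℓ : GaussianInt) :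
    gnorm ℓ ^ (2 / (1 + τ)) * ‖fcoeff (fun x => (FMP φ τ M x : ℂ)) (toComplex ℓ)‖ ≤
      ((PM M).ncard : ℝ)⁻¹ *
        ({q ∈ PM M | star q ∣ ℓ}.ncard * (4 ^ (2 / (1 + τ)) * C * M ^ 2)) := by
  classical
  have hzero : ∀ q ∈ (finite_PM M).toFinset,
      fcoeff (fun x => (Phi φ (M ^ (-τ) / 2) (toComplex q * x) : ℂ)) (toComplex ℓ) ≠ 0 →
        star q ∣ ℓ := fun q hq =>
    star_dvd_of_fcoeff_comp_mul_ne_zero (periodic_ofReal_Phi φ _)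
      ((finite_PM M).mem_toFinset.1 hq).1.ne_zero
  have hcard : {q ∈ PM M | star q ∣ ℓ}.ncard =
      ((finite_PM M).toFinset.filter (star · ∣ ℓ)).card := by
    rw [← Set.ncard_coe_finset, Finset.coe_filter]
    simp only [Set.Finite.mem_toFinset]
  have hgnorm : 0 ≤ gnorm ℓ := (abs_nonneg _).trans (le_max_left _ _)
  rw [fcoeff_FMP hφ hφc τ hM, ← Finset.sum_filter_of_ne hzero, norm_mul, norm_inv, norm_natCast,
    mul_left_comm, hcard, ← nsmul_eq_mul]
  gcongr
  refine (mul_le_mul_of_nonneg_left (norm_sum_le _ _) (by positivity)).trans ?_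
  rw [Finset.mul_sum]
  refine Finset.sum_le_card_nsmul _ _ _ fun q hq => ?_
  obtain ⟨hqP, hdvd⟩ := Finset.mem_filter.1 hq
  obtain ⟨hprime, -, hqM⟩ := (finite_PM M).mem_toFinset.1 hqP
  exact rpow_gnorm_mul_norm_fcoeff_Phi_comp_mul_le hφ hφc hτ hM hC hprime.ne_zero hqM hdvd

theorem exists_forall_ncard_inv_mul_ncard_star_dvd_mul_sq_le :
    ∃ C, ∀ M, 4 ≤ M → ∀ ℓ : GaussianInt, 2 ≤ gnorm ℓ →
      ((PM M).ncard : ℝ)⁻¹ * ({q ∈ PM M | star q ∣ ℓ}.ncard * M ^ 2) ≤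
        C * Real.log (gnorm ℓ) := by
  obtain ⟨c, hc, hPM⟩ := exists_forall_mul_sq_le_ncard_PM_mul_log
  refine ⟨4 * Nat.card GaussianIntˣ / c, fun M hM ℓ hℓ => ?_⟩
  have hdvd := ncard_PM_star_dvd_mul_log_le hM hℓ
  rcases (PM M).eq_empty_or_nonempty with hempty | hne
  · have := Real.log_nonneg (by linarith : 1 ≤ gnorm ℓ)
    simp only [hempty, Set.ncard_empty, Nat.cast_zero, inv_zero, zero_mul]
    positivity
  have hcard : 0 < ((PM M).ncard : ℝ) := by exact_mod_cast (Set.ncard_pos (finite_PM M)).2 hne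
  rw [inv_mul_le_iff₀ hcard, div_mul_eq_mul_div, mul_div_assoc', le_div_iff₀ hc]
  calc ({q ∈ PM M | star q ∣ ℓ}.ncard : ℝ) * M ^ 2 * c
    _ = {q ∈ PM M | star q ∣ ℓ}.ncard * (c * M ^ 2) := by ring
    _ ≤ {q ∈ PM M | star q ∣ ℓ}.ncard * ((PM M).ncard * Real.log M) := by
      exact mul_le_mul_of_nonneg_left (hPM M hM hne) (Nat.cast_nonneg _)
    _ = (PM M).ncard * ({q ∈ PM M | star q ∣ ℓ}.ncard * Real.log M) := by ring
    _ ≤ (PM M).ncard * (4 * Nat.card GaussianIntˣ * Real.log (gnorm ℓ)) := by gcongr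

theorem hasCompactSupport_of_support_subset_snorm2_le {R : ℝ}
    (hφ : Function.support φ ⊆ {z | snorm2 z ≤ R}) : HasCompactSupport φ := by
  refine HasCompactSupport.of_support_subset_isCompact
    (isCompact_Icc.reProdIm isCompact_Icc : IsCompact (Set.Icc (-R) R ×ℂ Set.Icc (-R) R))
    (hφ.trans fun z hz => ?_)
  obtain ⟨hre, him⟩ := max_le_iff.1 (show max |z.re| |z.im| ≤ R from hz)
  exact ⟨abs_le.1 hre, abs_le.1 him⟩

end PrimeAverages

theorem stmt19_general {τ : ℝ} (hτ : -1 < τ) {K : ℕ} {φ : ℂ → ℝ} (hφ : ContDiff ℝ K φ)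
    (hφc : HasCompactSupport φ) (hK : 2 / (1 + τ) ≤ K) :
    ∃ C : ℝ, ∀ M : ℝ, 4 ≤ M → ∀ ℓ : GaussianInt, 2 ≤ gnorm ℓ →
      ‖fcoeff (fun x => (FMP φ τ M x : ℂ)) (toComplex ℓ)‖ ≤
        C * gnorm ℓ ^ (-(2 / (1 + τ))) * Real.log (gnorm ℓ) := by
  obtain ⟨B, hB⟩ := exists_forall_ncard_inv_mul_ncard_star_dvd_mul_sq_le
  obtain ⟨C, hC⟩ := exists_forall_rpow_mul_norm_ftr_le (f := fun x => (φ x : ℂ))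
    (ofRealCLM.contDiff.comp hφ) (hφc.comp_left ofReal_zero)
    (div_nonneg zero_le_two (by linarith)) hK
  have hC0 : 0 ≤ C := le_trans (by positivity) (hC 0)
  refine ⟨4 ^ (2 / (1 + τ)) * C * B, fun M hM ℓ hℓ => ?_⟩
  have hgnorm : 0 < gnorm ℓ := by linarith
  have hcoeff := rpow_gnorm_mul_norm_fcoeff_FMP_le hφ.continuous hφc hτ (by linarith : 0 < M) hC ℓ
  rw [Real.rpow_neg hgnorm.le, mul_right_comm, ← div_eq_mul_inv, le_div_iff₀ (by positivity),
    mul_comm]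
  calc _ ≤ _ := hcoeff
    _ = 4 ^ (2 / (1 + τ)) * C *
        (((PM M).ncard : ℝ)⁻¹ * ({q ∈ PM M | star q ∣ ℓ}.ncard * M ^ 2)) := by ring
    _ ≤ 4 ^ (2 / (1 + τ)) * C * (B * Real.log (gnorm ℓ)) := by
      exact mul_le_mul_of_nonneg_left (hB M hM ℓ hℓ) (by positivity)
    _ = _ := by ring

theorem stmt19 (τ : ℝ) (hτ : 1 < τ) (K : ℕ) (φ : ℂ → ℝ) (hφ : ContDiff ℝ K φ) (hφpos : ∀ x, 0 ≤ φ x)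
    (hφsupp : Function.support φ ⊆ {z : ℂ | snorm2 z ≤ 1})
    (hφint : ∫ x : ℂ, φ x = 1)
    (hK : 2 + 2 / (1 + τ) < (K : ℝ)) :
    ∃ C : ℝ, ∀ M : ℝ, 4 ≤ M → ∀ ℓ : GaussianInt, ℓ ≠ 0 → 2 ≤ gnorm ℓ →
      ‖fcoeff (fun x => (FMP φ τ M x : ℂ)) (toComplex ℓ)‖ ≤
        C * gnorm ℓ ^ (-(2 / (1 + τ))) * Real.log (gnorm ℓ) := by
  obtain ⟨C, hC⟩ := stmt19_general (by linarith : -1 < τ) hφ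
    (hasCompactSupport_of_support_subset_snorm2_le hφsupp) (by linarith)
  exact ⟨C, fun M hM ℓ _ hℓ => hC M hM ℓ hℓ⟩
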